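/- Let P ∈ S be an ordinary singular point: φ_P is injective on Δ_P with image {i_1,…,i_s} ⊆ C, where s = #Δ_P, and μ_P(δ,δ′) = 1 for all δ ≠ δ′ in Δ_P. Let ω₁ := Σ_{i∈C} σ_i and let β = Σβ_iσ_i ∈ A¹ satisfy ω₁∧β = 0 in A²_{W,k}. Then: if s ≢ 0 (mod p), β_{i_1} = β_{i_2} = … = β_{i_s}; and if s ≡ 0 (mod p), β_{i_1} + β_{i_2} + … + β_{i_s} = 0 in k. -/

import Mathlib

/-!
Pairing `ψ^δ ∧ ψ^δ'` with the `δ₀`-coordinate of its boundary `ψ^δ - ψ^δ'` gives a linear form on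
`Λ² A_P` that kills the triangle relations, hence all of `I_P` unless a single component passes
through `P`. Applied to the local component of `α ∧ β` at `P` it yields the resonance condition
`β_{φ(δ₀)} · ∑_j μ_P(δ₀, j) α_j = α_{φ(δ₀)} · ∑_j μ_P(δ₀, j) β_j`, which is trivial in the
excluded case. At an ordinary point with `s` branches,
`∑_j μ_P(δ₀, j) α_j = ∑_δ α_{φ(δ)} - α_{φ(δ₀)}`, and `α = ω₁` leaves
`s · β_{φ(δ₀)} = ∑_δ β_{φ(δ)}` for every branch `δ₀`.
-/

open scoped Classical

/-- The weak combinatorial type of a plane projective curve. -/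
structure WeakComb (p : ℕ) where
  /-- the set of irreducible components -/
  C : Type
  [fintypeC : Fintype C]
  [decEqC : DecidableEq C]
  [nonemptyC : Nonempty C]
  /-- the set of singular points -/
  S : Type
  [fintypeS : Fintype S]
  [decEqS : DecidableEq S]
  /-- the local branches at each singular point -/
  Δ : S → Type
  [fintypeΔ : ∀ P, Fintype (Δ P)]
  [decEqΔ : ∀ P, DecidableEq (Δ P)]
  /-- each branch belongs to a component -/
  φ : ∀ P, Δ P → C
  /-- local intersection multiplicities of pairs of branches -/
  μ : ∀ P, Δ P → Δ P → ℕ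
  μ_symm : ∀ P δ δ', φ P δ ≠ φ P δ' → μ P δ δ' = μ P δ' δ
  μ_pos : ∀ P δ δ', φ P δ ≠ φ P δ' → 0 < μ P δ δ'

attribute [instance] WeakComb.fintypeC WeakComb.decEqC WeakComb.nonemptyC
attribute [instance] WeakComb.fintypeS WeakComb.decEqS WeakComb.fintypeΔ WeakComb.decEqΔ

namespace WeakComb

variable {p : ℕ} (W : WeakComb p)

/-- μ_P(δ,δ') with the convention that it vanishes on pairs of branches of the same component. -/
def muk (P : W.S) (δ δ' : W.Δ P) : ℕ :=
  if W.φ P δ = W.φ P δ' then 0 else W.μ P δ δ'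

/-- μ_P(δ, j): the multiplicity of intersection of the branch δ with the component j. -/
def muC (P : W.S) (δ : W.Δ P) (j : W.C) : ℕ :=
  ∑ δ' : W.Δ P, if W.φ P δ' = j then W.muk P δ δ' else 0

/-- A degree assignment: positive degrees satisfying the Bezout condition. -/
def IsDegree (d : W.C → ℕ) : Prop :=
  (∀ i, 0 < d i) ∧
  ∀ i j, i ≠ j →
    d i * d j = ∑ P : W.S, ∑ δ : W.Δ P, if W.φ P δ = i then W.muC P δ j else 0

/-- The basis vector σ_i of A¹ = (C → ZMod p). -/
noncomputable def sigma (i : W.C) : W.C → ZMod p := Pi.single i 1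

/-- The basis vector ψ_P^δ of A_P = (Δ_P → ZMod p). -/
noncomputable def psi (P : W.S) (δ : W.Δ P) : W.Δ P → ZMod p := Pi.single δ 1

/-- ψ_P^δ ∧ ψ_P^δ' as an element of Λ² A_P. -/
noncomputable def psiW (P : W.S) (δ δ' : W.Δ P) : ⋀[ZMod p]^2 (W.Δ P → ZMod p) :=
  ⟨ExteriorAlgebra.ιMulti (ZMod p) 2 ![W.psi P δ, W.psi P δ'],
   ExteriorAlgebra.ιMulti_range (ZMod p) 2 (Set.mem_range_self _)⟩

/-- The subspace I_P of Λ² A_P. -/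
noncomputable def IP (P : W.S) : Submodule (ZMod p) (⋀[ZMod p]^2 (W.Δ P → ZMod p)) :=
  Submodule.span (ZMod p)
    ({x | ∃ δ1 δ2 δ3 : W.Δ P, x = W.psiW P δ1 δ2 + W.psiW P δ2 δ3 + W.psiW P δ3 δ1} ∪
     {x | (∀ δ δ' : W.Δ P, W.φ P δ = W.φ P δ') ∧ ∃ δ1 δ2 : W.Δ P, x = W.psiW P δ1 δ2})

/-- The degree-two part A² = A^{2,0} ⊕ A^{2,∞} of the Combinatorial Aomoto algebra. -/
abbrev A2 (d : W.C → ℕ) : Type :=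
  ((P : W.S) → (⋀[ZMod p]^2 (W.Δ P → ZMod p)) ⧸ W.IP P) ×
  ({i : W.C // p ∣ d i} → ZMod p)

/-- The wedge product A¹ × A¹ → A², extending σ_i ∧ σ_j bilinearly. -/
noncomputable def wedge (d : W.C → ℕ) (α β : W.C → ZMod p) : W.A2 d :=
  (fun P => ∑ δ : W.Δ P, ∑ δ' : W.Δ P,
      (α (W.φ P δ) * β (W.φ P δ') * (W.muk P δ δ' : ZMod p)) •
        Submodule.Quotient.mk (W.psiW P δ δ'),
   fun i => α i.1 * (∑ j : W.C, (d j : ZMod p) * β j)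
          - β i.1 * (∑ j : W.C, (d j : ZMod p) * α j))

/-- The linear map ·∧α : A¹ → A², β ↦ β ∧ α. -/
noncomputable def wedgeL (d : W.C → ℕ) (α : W.C → ZMod p) :
    (W.C → ZMod p) →ₗ[ZMod p] W.A2 d where
  toFun β := W.wedge d β α
  map_add' β γ := by
    refine Prod.ext ?_ ?_
    · funext P
      simp only [wedge, Pi.add_apply, Prod.fst_add]
      rw [← Finset.sum_add_distrib]
      refine Finset.sum_congr rfl fun δ _ => ?_
      rw [← Finset.sum_add_distrib]
      refine Finset.sum_congr rfl fun δ' _ => ?_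
      rw [← add_smul, add_mul, add_mul]
    · funext i
      simp only [wedge, Pi.add_apply, Prod.snd_add]
      rw [show (∑ x : W.C, (d x : ZMod p) * (β x + γ x))
            = (∑ x : W.C, (d x : ZMod p) * β x) + ∑ x : W.C, (d x : ZMod p) * γ x by
        rw [← Finset.sum_add_distrib]; exact Finset.sum_congr rfl fun x _ => by ring]
      ring
  map_smul' c β := by
    refine Prod.ext ?_ ?_
    · funext P
      simp only [wedge, Pi.smul_apply, smul_eq_mul, RingHom.id_apply, Prod.smul_fst]
      rw [Finset.smul_sum]
      refine Finset.sum_congr rfl fun δ _ => ?_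
      rw [Finset.smul_sum]
      refine Finset.sum_congr rfl fun δ' _ => ?_
      rw [smul_smul]
      ring_nf
    · funext i
      simp only [wedge, Pi.smul_apply, smul_eq_mul, RingHom.id_apply, Prod.smul_snd]
      rw [show (∑ x : W.C, (d x : ZMod p) * (c * β x)) = c * ∑ x : W.C, (d x : ZMod p) * β x by
        rw [Finset.mul_sum]; exact Finset.sum_congr rfl fun x _ => by ring]
      ring

/-- The kernel of ·∧α : A¹ → A². -/
noncomputable def wedgeKer (d : W.C → ℕ) (α : W.C → ZMod p) :
    Submodule (ZMod p) (W.C → ZMod p) :=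
  LinearMap.ker (W.wedgeL d α)

/-- H¹ of the Combinatorial Aomoto complex with differential ·∧α. -/
noncomputable abbrev H1 (d : W.C → ℕ) (α : W.C → ZMod p) :=
  (W.wedgeKer d α) ⧸
    (Submodule.comap (W.wedgeKer d α).subtype (Submodule.span (ZMod p) {α}))

end WeakComb

namespace WeakComb

variable {p : ℕ} (W : WeakComb p)

/-- The resonance condition for (α,β) at the branch δ of the point P. -/
def ResCond (α β : W.C → ZMod p) (P : W.S) (δ : W.Δ P) : Prop :=
  β (W.φ P δ) * (∑ j : W.C, (W.muC P δ j : ZMod p) * α j)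
    - α (W.φ P δ) * (∑ j : W.C, (W.muC P δ j : ZMod p) * β j) = 0

/-- P is a p-transversal point for the pair of components i ≠ j. -/
def PTransPoint (P : W.S) (i j : W.C) : Prop :=
  i ≠ j ∧ (∀ δ : W.Δ P, W.φ P δ = i ∨ W.φ P δ = j) ∧
  (∃ δ : W.Δ P, W.φ P δ = i) ∧ (∃ δ : W.Δ P, W.φ P δ = j) ∧
  ((∃ δ : W.Δ P, W.φ P δ = i ∧ ((W.muC P δ j : ZMod p) ≠ 0)) ∨
   (∃ δ : W.Δ P, W.φ P δ = j ∧ ((W.muC P δ i : ZMod p) ≠ 0)))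

/-- The components i and j are p-transversal at a point. -/
def PTransComponents (i j : W.C) : Prop := ∃ P : W.S, W.PTransPoint P i j

/-- α is non-coordinate if all its coordinates are nonzero. -/
def NonCoordinate (α : W.C → ZMod p) : Prop := ∀ i, α i ≠ 0

end WeakComb

/-- The setoid (partition) obtained from s by merging the classes of c₀ and c₁. -/
def mergeSetoid {α : Type*} (s : Setoid α) (c₀ c₁ : α) : Setoid α :=
  Relation.EqvGen.setoid (fun a b => s.r a b ∨ (a = c₀ ∧ b = c₁))

namespace WeakComb

variable {p : ℕ} (W : WeakComb p)

/-- W is p-transversal at P with respect to (α, π), where the surjection π is encoded by the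
setoid s of its fibres; the two classes π(φ_P(Δ_P)) = {i',j'} are those of c₀ and c₁. -/
def PTransversalAt (α : W.C → ZMod p) (s : Setoid W.C) (P : W.S) (c₀ c₁ : W.C) : Prop :=
  ¬ s.r c₀ c₁ ∧
  (∀ δ : W.Δ P, s.r (W.φ P δ) c₀ ∨ s.r (W.φ P δ) c₁) ∧
  (∃ δ : W.Δ P, s.r (W.φ P δ) c₀) ∧ (∃ δ : W.Δ P, s.r (W.φ P δ) c₁) ∧
  ∃ δ : W.Δ P, s.r (W.φ P δ) c₀ ∧
    (∑ δ' : W.Δ P, if s.r (W.φ P δ') c₁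
        then (W.muk P δ δ' : ZMod p) * α (W.φ P δ') else 0) ≠ 0

/-- A p-reduction step with respect to α. -/
def RedStep (α : W.C → ZMod p) (s s' : Setoid W.C) : Prop :=
  ∃ (P : W.S) (c₀ c₁ : W.C), W.PTransversalAt α s P c₀ c₁ ∧ s' = mergeSetoid s c₀ c₁

/-- W is completely p-reductive with respect to α: starting from the identity partition (⊥),
some finite sequence of p-reduction steps reaches the one-class partition (⊤). -/
def CompletelyPReductive (α : W.C → ZMod p) : Prop :=
  Relation.ReflTransGen (W.RedStep α) ⊥ ⊤

/-- β is π-proportional to α, for the surjection π encoded by the setoid s: on each class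
of s, β is a scalar multiple of α. -/
def Proportional (s : Setoid W.C) (α β : W.C → ZMod p) : Prop :=
  ∀ c : W.C, ∃ l : ZMod p, ∀ c', s.r c c' → β c' = l * α c'

end WeakComb

/-- A combinatorial quasi-fiber structure of rank r on W. -/
structure QuasiFiber {p : ℕ} (W : WeakComb p) (r : ℕ) where
  /-- which quasi-fiber each component belongs to -/
  g : W.C → Fin r
  g_surj : Function.Surjective g
  /-- multiplicities of components inside the quasi-fibers -/
  m : W.C → ℕ
  m_pos : ∀ c, 0 < m c
  /-- the set of base points -/
  B : Set W.S
  fiber_off_base : ∀ P : W.S, P ∉ B → ∀ δ δ' : W.Δ P, g (W.φ P δ) = g (W.φ P δ')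

namespace WeakComb

variable {p : ℕ} (W : WeakComb p) {r : ℕ}

/-- M_s(δ) for a branch δ at a base point P. -/
noncomputable def Mcoef (F : QuasiFiber W r) (P : W.S) (δ : W.Δ P) (s : Fin r) : ZMod p :=
  ∑ δ' : W.Δ P,
    if W.φ P δ' ≠ W.φ P δ ∧ F.g (W.φ P δ') = s
      then ((F.m (W.φ P δ') * W.μ P δ δ' : ℕ) : ZMod p) else 0

/-- ω_a = Σ_c m_c · a_{g(c)} · σ_c ∈ A¹. -/
noncomputable def omega (F : QuasiFiber W r) (a : Fin r → ZMod p) : W.C → ZMod p :=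
  fun c => (F.m c : ZMod p) * a (F.g c)

/-- The restricted combinatorics W°_s of the quasi-fiber s. -/
noncomputable def restrict (F : QuasiFiber W r) (s : Fin r) : WeakComb p where
  C := {c : W.C // F.g c = s}
  fintypeC := Fintype.ofFinite _
  decEqC := inferInstance
  nonemptyC := by obtain ⟨c, hc⟩ := F.g_surj s; exact ⟨⟨c, hc⟩⟩
  S := {P : W.S // Nonempty (W.Δ P) ∧ ∀ δ : W.Δ P, F.g (W.φ P δ) = s}
  fintypeS := Fintype.ofFinite _
  decEqS := inferInstance
  Δ := fun P => W.Δ P.1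
  fintypeΔ := fun P => inferInstance
  decEqΔ := fun P => inferInstance
  φ := fun P δ => ⟨W.φ P.1 δ, P.2.2 δ⟩
  μ := fun P δ δ' => W.μ P.1 δ δ'
  μ_symm := fun P δ δ' h => W.μ_symm P.1 δ δ' (fun e => h (Subtype.ext e))
  μ_pos := fun P δ δ' h => W.μ_pos P.1 δ δ' (fun e => h (Subtype.ext e))

/-- The restriction ω_a|_s of ω_a to the restricted combinatorics W°_s. -/
noncomputable def omegaRes (F : QuasiFiber W r) (a : Fin r → ZMod p) (s : Fin r) :
    (W.restrict F s).C → ZMod p :=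
  fun c => (F.m c.1 : ZMod p) * a s

end WeakComb

section Statements

open WeakComb

variable {p : ℕ} [Fact p.Prime]

/-- The `i`-th coordinate of the boundary `u ∧ v ↦ ε(v) u - ε(u) v`, where `ε` is the sum of the
coordinates, as a linear form on `Λ²(ι → R)`. It is the form that detects the local components of
products in the Aomoto algebra, encoded as the pairing with `proj i ∧ ε`. -/
noncomputable def boundaryCoord {R ι : Type*} [CommRing R] [Fintype ι] (i : ι) :
    Module.Dual R (⋀[R]^2 (ι → R)) :=
  exteriorPower.pairingDual R (ι → R) 2
    (exteriorPower.ιMulti R 2 ![LinearMap.proj i, ∑ j, LinearMap.proj j])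

lemma boundaryCoord_ιMulti {R ι : Type*} [CommRing R] [Fintype ι] (i : ι) (u v : ι → R) :
    boundaryCoord i (exteriorPower.ιMulti R 2 ![u, v]) = u i * ∑ j, v j - v i * ∑ j, u j := by
  simp [boundaryCoord, exteriorPower.pairingDual_ιMulti_ιMulti, Matrix.det_fin_two, mul_comm]

namespace WeakComb

variable {n : ℕ} (W : WeakComb n) (P : W.S)

lemma sum_sigma : ∑ i, W.sigma i = 1 :=
  Finset.univ_sum_single 1

lemma muk_comm (δ δ' : W.Δ P) : W.muk P δ δ' = W.muk P δ' δ := by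
  by_cases hφ : W.φ P δ = W.φ P δ'
  · simp only [muk, if_pos hφ, if_pos hφ.symm]
  · simp only [muk, if_neg hφ, if_neg (Ne.symm hφ), W.μ_symm P δ δ' hφ]

lemma sum_muC_mul (δ : W.Δ P) (α : W.C → ZMod n) :
    ∑ j, (W.muC P δ j : ZMod n) * α j = ∑ δ', (W.muk P δ δ' : ZMod n) * α (W.φ P δ') := by
  simp only [muC, Nat.cast_sum, Finset.sum_mul]
  rw [Finset.sum_comm]
  simp

lemma boundaryCoord_psiW (δ₀ δ δ' : W.Δ P) :
    boundaryCoord δ₀ (W.psiW P δ δ') =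
      (if δ = δ₀ then 1 else 0) - (if δ' = δ₀ then 1 else 0) := by
  refine (boundaryCoord_ιMulti δ₀ (W.psi P δ) (W.psi P δ')).trans ?_
  simp [psi, Pi.single_apply, eq_comm]

lemma IP_le_ker_boundaryCoord (hφ : ¬ ∀ δ δ' : W.Δ P, W.φ P δ = W.φ P δ') (δ₀ : W.Δ P) :
    W.IP P ≤ LinearMap.ker (boundaryCoord δ₀) := by
  refine Submodule.span_le.2 ?_
  rintro _ (⟨δ₁, δ₂, δ₃, rfl⟩ | ⟨hφ', _⟩)
  · simp [boundaryCoord_psiW]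
  · exact absurd hφ' hφ

lemma boundaryCoord_sum_smul_psiW (δ₀ : W.Δ P) (c : W.Δ P → W.Δ P → ZMod n) :
    boundaryCoord δ₀ (∑ δ, ∑ δ', c δ δ' • W.psiW P δ δ') = ∑ δ, c δ₀ δ - ∑ δ, c δ δ₀ := by
  simp only [map_sum, map_smul, boundaryCoord_psiW, smul_eq_mul, mul_sub, mul_ite, mul_one,
    mul_zero, Finset.sum_sub_distrib]
  congr 1
  · rw [Finset.sum_comm]
    simp
  · simp

variable {W P}

theorem resCond_of_wedge_fst_eq_zero {d : W.C → ℕ} {α β : W.C → ZMod n}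
    (h : (W.wedge d α β).1 P = 0) (δ₀ : W.Δ P) : W.ResCond α β P δ₀ := by
  simp only [ResCond, sum_muC_mul]
  by_cases hφ : ∀ δ δ' : W.Δ P, W.φ P δ = W.φ P δ'
  · have hmuk (δ : W.Δ P) : W.muk P δ₀ δ = 0 := if_pos (hφ δ₀ δ)
    simp [hmuk]
  have hmem : ∑ δ, ∑ δ', (α (W.φ P δ) * β (W.φ P δ') * (W.muk P δ δ' : ZMod n)) •
      W.psiW P δ δ' ∈ W.IP P := by
    rw [← Submodule.Quotient.mk_eq_zero, ← h]
    simp only [wedge, ← Submodule.mkQ_apply, map_sum, map_smul]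
  have hsum := W.IP_le_ker_boundaryCoord P hφ δ₀ hmem
  rw [LinearMap.mem_ker, boundaryCoord_sum_smul_psiW, sub_eq_zero] at hsum
  rw [sub_eq_zero, Finset.mul_sum, Finset.mul_sum]
  calc ∑ δ, β (W.φ P δ₀) * ((W.muk P δ₀ δ : ZMod n) * α (W.φ P δ))
    _ = ∑ δ, α (W.φ P δ) * β (W.φ P δ₀) * (W.muk P δ δ₀ : ZMod n) :=
      Finset.sum_congr rfl fun δ _ => by rw [W.muk_comm P δ₀ δ]; ring
    _ = ∑ δ, α (W.φ P δ₀) * β (W.φ P δ) * (W.muk P δ₀ δ : ZMod n) := hsum.symm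
    _ = ∑ δ, α (W.φ P δ₀) * ((W.muk P δ₀ δ : ZMod n) * β (W.φ P δ)) :=
      Finset.sum_congr rfl fun δ _ => by ring

variable (W P) in
/-- Ordinary singular points: the branches lie on distinct components and meet pairwise
transversally. The multiplicity `μ P δ δ` is left free, as it never enters `A²`. -/
structure IsOrdinary : Prop where
  injective : Function.Injective (W.φ P)
  μ_eq_one : ∀ δ δ' : W.Δ P, δ ≠ δ' → W.μ P δ δ' = 1

namespace IsOrdinary

lemma muk_eq (hP : W.IsOrdinary P) (δ δ' : W.Δ P) :
    W.muk P δ δ' = if δ = δ' then 0 else 1 := by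
  simp only [muk, hP.injective.eq_iff]
  split_ifs with hδ
  · rfl
  · exact hP.μ_eq_one δ δ' hδ

lemma sum_muC_mul (hP : W.IsOrdinary P) (δ : W.Δ P) (α : W.C → ZMod n) :
    ∑ j, (W.muC P δ j : ZMod n) * α j = ∑ δ', α (W.φ P δ') - α (W.φ P δ) := by
  rw [W.sum_muC_mul, eq_sub_iff_add_eq', ← Finset.add_sum_erase _ _ (Finset.mem_univ δ)]
  simp [hP.muk_eq, Finset.sum_ite, Finset.filter_ne]

theorem mul_sum_eq_mul_sum (hP : W.IsOrdinary P) {d : W.C → ℕ} {α β : W.C → ZMod n}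
    (h : (W.wedge d α β).1 P = 0) (δ : W.Δ P) :
    β (W.φ P δ) * ∑ δ', α (W.φ P δ') = α (W.φ P δ) * ∑ δ', β (W.φ P δ') := by
  have hres := resCond_of_wedge_fst_eq_zero h δ
  rw [ResCond, hP.sum_muC_mul, hP.sum_muC_mul] at hres
  linear_combination hres

end IsOrdinary

end WeakComb

theorem stmt4_general {n : ℕ} {W : WeakComb n} {d : W.C → ℕ} {P : W.S} (hP : W.IsOrdinary P)
    {β : W.C → ZMod n} (h : (W.wedge d (∑ i, W.sigma i) β).1 P = 0) :
    (IsLeftRegular (Fintype.card (W.Δ P) : ZMod n) →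
        ∀ δ δ' : W.Δ P, β (W.φ P δ) = β (W.φ P δ')) ∧
    ((Fintype.card (W.Δ P) : ZMod n) = 0 → ∑ δ : W.Δ P, β (W.φ P δ) = 0) := by
  have hsum (δ : W.Δ P) :
      (Fintype.card (W.Δ P) : ZMod n) * β (W.φ P δ) = ∑ δ', β (W.φ P δ') := by
    rw [W.sum_sigma] at h
    simpa [mul_comm] using hP.mul_sum_eq_mul_sum h δ
  refine ⟨fun hs δ δ' => hs ((hsum δ).trans (hsum δ').symm), fun hs => ?_⟩
  rcases isEmpty_or_nonempty (W.Δ P) with _ | ⟨⟨δ⟩⟩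
  · exact Fintype.sum_empty _
  · rw [← hsum δ, hs, zero_mul]

/-- Proposition `ordinary_point`. -/
theorem stmt4 (W : WeakComb p) (d : W.C → ℕ) (hd : W.IsDegree d)
    (P : W.S) (hinj : Function.Injective (W.φ P))
    (hord : ∀ δ δ' : W.Δ P, δ ≠ δ' → W.μ P δ δ' = 1)
    (β : W.C → ZMod p)
    (h : W.wedge d (∑ i : W.C, W.sigma i) β = 0) :
    ((Fintype.card (W.Δ P) : ZMod p) ≠ 0 →
        ∀ δ δ' : W.Δ P, β (W.φ P δ) = β (W.φ P δ')) ∧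
    ((Fintype.card (W.Δ P) : ZMod p) = 0 →
        ∑ δ : W.Δ P, β (W.φ P δ) = 0) := by
  obtain ⟨heq, hzero⟩ := stmt4_general ⟨hinj, hord⟩ (congrFun (congrArg Prod.fst h) P)
  exact ⟨fun hs => heq (mul_right_injective₀ hs), hzero⟩

end Statements
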